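/- Fix constants A ≥ 2 and Θ > 0, and let Z be a nonnegative random variable satisfying P(Z > ϑ) ≤ 2A · exp(−ϑ²/(2eΘ²)) for all ϑ > 0. Then for every real p ≥ 1 one has E[Z^{2p}] ≤ (p^p + (ln A)^p) · (8eΘ²)^p. -/

import Mathlib

open MeasureTheory Real

/-!
Write `L = log A` and `X = Z² / (2eΘ²)`. The tail hypothesis says `P(X > x) ≤ 2 exp (L - x)`, so the
excess `X - L` has tail at most `2 exp (-t)`, and the layer-cake formula bounds the `p`-th moment of
its positive part by `2 Γ(p + 1) ≤ 2 p ^ p`. Convexity of `x ↦ x ^ p` applied to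
`X ≤ L + (X - L)⁺` then gives `E[X ^ p] ≤ 2 ^ p (L ^ p + p ^ p)`.
-/

open Set
open scoped ENNReal

section Gamma

lemma gamma_le_one_of_mem_Icc {x : ℝ} (hx : x ∈ Icc 1 2) : Gamma x ≤ 1 := by
  simpa using convexOn_Gamma.le_max_of_mem_Icc (by simp) (by simp) hx

lemma gamma_le_rpow_sub_one {x : ℝ} (hx : 1 ≤ x) : Gamma x ≤ x ^ (x - 1) := by
  obtain ⟨n, hn⟩ : ∃ n : ℕ, x ≤ n + 2 := (exists_nat_ge x).imp fun _ h ↦ by linarith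
  induction n generalizing x with
  | zero =>
    calc Gamma x ≤ 1 := gamma_le_one_of_mem_Icc ⟨hx, by simpa using hn⟩
      _ ≤ x ^ (x - 1) := one_le_rpow hx (by linarith)
  | succ n ih =>
    obtain hx2 | hx2 := le_total x 2
    · exact ih hx (by linarith [n.cast_nonneg (α := ℝ)])
    have h_pred : Gamma (x - 1) ≤ (x - 1) ^ (x - 1 - 1) :=
      ih (by linarith) (by push_cast at hn; linarith)
    calc Gamma x = (x - 1) * Gamma (x - 1) := by
          rw [← Gamma_add_one (by linarith), sub_add_cancel]
      _ ≤ (x - 1) * (x - 1) ^ (x - 1 - 1) := by gcongr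
      _ = (x - 1) ^ (x - 1) := by
          rw [rpow_sub_one (by linarith), mul_div_cancel₀ _ (by linarith)]
      _ ≤ x ^ (x - 1) := by gcongr; linarith

lemma gamma_add_one_le_rpow_self {p : ℝ} (hp : 1 ≤ p) : Gamma (p + 1) ≤ p ^ p :=
  calc Gamma (p + 1) = p * Gamma p := Gamma_add_one (by linarith)
    _ ≤ p * p ^ (p - 1) := by gcongr; exact gamma_le_rpow_sub_one hp
    _ = p ^ p := by rw [rpow_sub_one (by linarith), mul_div_cancel₀ _ (by linarith)]

lemma two_rpow_sub_one_mul_add_gamma_le {a p : ℝ} (ha : 0 ≤ a) (hp : 1 ≤ p) :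
    2 ^ (p - 1) * (a + 2 * Gamma (p + 1)) ≤ 2 ^ p * (p ^ p + a) :=
  calc 2 ^ (p - 1) * (a + 2 * Gamma (p + 1))
      ≤ 2 ^ (p - 1) * (2 * a + 2 * p ^ p) := by
        gcongr
        · linarith
        · exact gamma_add_one_le_rpow_self hp
    _ = 2 ^ p * (p ^ p + a) := by rw [rpow_sub_one two_ne_zero]; ring

lemma lintegral_exp_neg_mul_rpow_Ioi {s : ℝ} (hs : 0 < s) :
    ∫⁻ t in Ioi (0 : ℝ), ENNReal.ofReal (exp (-t) * t ^ (s - 1)) = ENNReal.ofReal (Gamma s) := by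
  rw [Gamma_eq_integral hs, ofReal_integral_eq_lintegral_ofReal (GammaIntegral_convergent hs)]
  filter_upwards [ae_restrict_mem measurableSet_Ioi] with t (ht : 0 < t)
  positivity

end Gamma

section ExponentialTail

variable {Ω : Type*} [MeasurableSpace Ω] {μ : Measure Ω} {X : Ω → ℝ} {p : ℝ}

lemma lintegral_rpow_le_of_exp_tail (hX : AEMeasurable X μ) {C : ℝ≥0∞}
    (htail : ∀ t : ℝ, 0 < t → μ {ω | t < X ω} ≤ C * ENNReal.ofReal (exp (-t))) (hp : 0 < p) :
    ∫⁻ ω, ENNReal.ofReal (X ω) ^ p ∂μ ≤ C * ENNReal.ofReal (Gamma (p + 1)) := by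
  have h_posPart (ω : Ω) : ENNReal.ofReal (X ω) ^ p = ENNReal.ofReal (max (X ω) 0 ^ p) := by
    rw [← ENNReal.ofReal_rpow_of_nonneg (le_max_right _ _) hp.le]
    simp [ENNReal.ofReal_max]
  have h_weighted_tail (t : ℝ) (ht : t ∈ Ioi 0) :
      μ {ω | t < max (X ω) 0} * ENNReal.ofReal (t ^ (p - 1)) ≤
        C * ENNReal.ofReal (exp (-t) * t ^ (p - 1)) := by
    have h_set : {ω | t < max (X ω) 0} = {ω | t < X ω} := by
      ext ω
      simp [not_lt_of_gt (mem_Ioi.1 ht)]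
    rw [h_set, ENNReal.ofReal_mul (exp_pos _).le, ← mul_assoc]
    gcongr
    exact htail t ht
  calc ∫⁻ ω, ENNReal.ofReal (X ω) ^ p ∂μ
      = ENNReal.ofReal p *
          ∫⁻ t in Ioi 0, μ {ω | t < max (X ω) 0} * ENNReal.ofReal (t ^ (p - 1)) := by
        simp_rw [h_posPart]
        exact lintegral_rpow_eq_lintegral_meas_lt_mul μ (ae_of_all _ fun _ ↦ le_max_right _ _)
          (hX.max aemeasurable_const) hp
    _ ≤ ENNReal.ofReal p * ∫⁻ t in Ioi 0, C * ENNReal.ofReal (exp (-t) * t ^ (p - 1)) := by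
        refine mul_le_mul_right ?_ _
        exact setLIntegral_mono' measurableSet_Ioi h_weighted_tail
    _ = C * ENNReal.ofReal (Gamma (p + 1)) := by
        rw [lintegral_const_mul _ (by fun_prop), lintegral_exp_neg_mul_rpow_Ioi hp,
          Gamma_add_one hp.ne', ENNReal.ofReal_mul hp.le, mul_left_comm]

lemma lintegral_rpow_le_of_shifted_exp_tail (hX : AEMeasurable X μ) {C : ℝ≥0∞} {L : ℝ}
    (htail : ∀ t : ℝ, 0 < t → μ {ω | L + t < X ω} ≤ C * ENNReal.ofReal (exp (-t)))
    (hp : 1 ≤ p) :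
    ∫⁻ ω, ENNReal.ofReal (X ω) ^ p ∂μ ≤
      2 ^ (p - 1) * (ENNReal.ofReal L ^ p * μ univ + C * ENNReal.ofReal (Gamma (p + 1))) := by
  have h_excess : ∫⁻ ω, ENNReal.ofReal (X ω - L) ^ p ∂μ ≤ C * ENNReal.ofReal (Gamma (p + 1)) :=
    lintegral_rpow_le_of_exp_tail (hX.sub_const L)
      (by simpa only [lt_sub_iff_add_lt'] using htail) (by linarith)
  have h_split (ω : Ω) : ENNReal.ofReal (X ω) ^ p ≤
      2 ^ (p - 1) * (ENNReal.ofReal L ^ p + ENNReal.ofReal (X ω - L) ^ p) :=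
    calc ENNReal.ofReal (X ω) ^ p
        ≤ (ENNReal.ofReal L + ENNReal.ofReal (X ω - L)) ^ p := by
          gcongr
          simpa using ENNReal.ofReal_add_le (p := L) (q := X ω - L)
      _ ≤ _ := ENNReal.rpow_add_le_mul_rpow_add_rpow _ _ hp
  calc ∫⁻ ω, ENNReal.ofReal (X ω) ^ p ∂μ
      ≤ ∫⁻ ω, 2 ^ (p - 1) * (ENNReal.ofReal L ^ p + ENNReal.ofReal (X ω - L) ^ p) ∂μ :=
        lintegral_mono h_split
    _ = 2 ^ (p - 1) *
          (ENNReal.ofReal L ^ p * μ univ + ∫⁻ ω, ENNReal.ofReal (X ω - L) ^ p ∂μ) := by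
        rw [lintegral_const_mul' _ _ (by finiteness), lintegral_add_left measurable_const,
          lintegral_const]
    _ ≤ _ := by gcongr

lemma lintegral_rpow_le_of_mul_exp_tail [IsProbabilityMeasure μ] (hX : AEMeasurable X μ)
    {A : ℝ} (hA : 1 ≤ A)
    (htail : ∀ x : ℝ, 0 < x → μ.real {ω | x < X ω} ≤ 2 * A * exp (-x)) (hp : 1 ≤ p) :
    ∫⁻ ω, ENNReal.ofReal (X ω) ^ p ∂μ ≤ ENNReal.ofReal (2 ^ p * (p ^ p + log A ^ p)) := by
  have hL : 0 ≤ log A := log_nonneg hA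
  have h_excess_tail (t : ℝ) (ht : 0 < t) :
      μ {ω | log A + t < X ω} ≤ 2 * ENNReal.ofReal (exp (-t)) := by
    rw [← ENNReal.ofReal_ofNat 2, ← ENNReal.ofReal_mul zero_le_two,
      ENNReal.le_ofReal_iff_toReal_le (measure_ne_top _ _) (by positivity)]
    calc μ.real {ω | log A + t < X ω} ≤ 2 * A * exp (-(log A + t)) := htail _ (by positivity)
      _ = 2 * exp (-t) := by
        rw [neg_add, exp_add, exp_neg (log A), exp_log (by linarith)]
        field_simp
  calc ∫⁻ ω, ENNReal.ofReal (X ω) ^ p ∂μ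
      ≤ 2 ^ (p - 1) * (ENNReal.ofReal (log A) ^ p + 2 * ENNReal.ofReal (Gamma (p + 1))) := by
        simpa using lintegral_rpow_le_of_shifted_exp_tail hX h_excess_tail hp
    _ = ENNReal.ofReal (2 ^ (p - 1) * (log A ^ p + 2 * Gamma (p + 1))) := by
        rw [ENNReal.ofReal_mul (by positivity),
          ENNReal.ofReal_add (by positivity) (by positivity), ENNReal.ofReal_mul zero_le_two,
          ← ENNReal.ofReal_rpow_of_pos two_pos,
          ← ENNReal.ofReal_rpow_of_nonneg hL (by linarith), ENNReal.ofReal_ofNat]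
    _ ≤ ENNReal.ofReal (2 ^ p * (p ^ p + log A ^ p)) :=
        ENNReal.ofReal_le_ofReal (two_rpow_sub_one_mul_add_gamma_le (rpow_nonneg hL p) hp)

lemma integrable_rpow_and_integral_rpow_le_of_mul_exp_tail [IsProbabilityMeasure μ]
    (hX : AEMeasurable X μ) (hX_nonneg : 0 ≤ᵐ[μ] X) {A : ℝ} (hA : 1 ≤ A)
    (htail : ∀ x : ℝ, 0 < x → μ.real {ω | x < X ω} ≤ 2 * A * exp (-x)) (hp : 1 ≤ p) :
    Integrable (fun ω ↦ X ω ^ p) μ ∧ ∫ ω, X ω ^ p ∂μ ≤ 2 ^ p * (p ^ p + log A ^ p) := by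
  have h_lintegral : ∫⁻ ω, ENNReal.ofReal (X ω ^ p) ∂μ ≤
      ENNReal.ofReal (2 ^ p * (p ^ p + log A ^ p)) := by
    refine (lintegral_congr_ae ?_).trans_le (lintegral_rpow_le_of_mul_exp_tail hX hA htail hp)
    filter_upwards [hX_nonneg] with ω hω
    exact (ENNReal.ofReal_rpow_of_nonneg hω (by linarith)).symm
  have h_nonneg : 0 ≤ᵐ[μ] fun ω ↦ X ω ^ p := hX_nonneg.mono fun _ hω ↦ rpow_nonneg hω p
  have h_meas : AEStronglyMeasurable (fun ω ↦ X ω ^ p) μ := (hX.pow_const p).aestronglyMeasurable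
  refine ⟨(lintegral_ofReal_ne_top_iff_integrable h_meas h_nonneg).1
    (ne_top_of_le_ne_top ENNReal.ofReal_ne_top h_lintegral), ?_⟩
  rw [integral_eq_lintegral_of_nonneg_ae h_nonneg h_meas]
  have hL : 0 ≤ log A := log_nonneg hA
  exact ENNReal.toReal_le_of_le_ofReal (by positivity) h_lintegral

end ExponentialTail

theorem tail_to_moment_general {Ω : Type*} [MeasurableSpace Ω] {P : Measure Ω}
    [IsProbabilityMeasure P] {Z : Ω → ℝ} (hZ : AEMeasurable Z P) (hZ_nonneg : 0 ≤ᵐ[P] Z)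
    {A K : ℝ} (hA : 1 ≤ A) (hK : 0 < K)
    (htail : ∀ ϑ : ℝ, 0 < ϑ → P.real {ω | ϑ < Z ω} ≤ 2 * A * exp (-ϑ ^ 2 / K))
    {p : ℝ} (hp : 1 ≤ p) :
    Integrable (fun ω ↦ Z ω ^ (2 * p)) P ∧
      ∫ ω, Z ω ^ (2 * p) ∂P ≤ (p ^ p + log A ^ p) * (2 * K) ^ p := by
  have h_sq_tail (x : ℝ) (hx : 0 < x) : P.real {ω | x < Z ω ^ 2 / K} ≤ 2 * A * exp (-x) :=
    calc P.real {ω | x < Z ω ^ 2 / K} = P.real {ω | √(x * K) < Z ω} := by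
          refine measureReal_congr ?_
          filter_upwards [hZ_nonneg] with ω hω
          exact propext ((lt_div_iff₀ hK).trans (sqrt_lt (by positivity) hω).symm)
      _ ≤ 2 * A * exp (-√(x * K) ^ 2 / K) := htail _ (by positivity)
      _ = 2 * A * exp (-x) := by
          rw [sq_sqrt (by positivity), neg_div, mul_div_cancel_right₀ _ hK.ne']
  have h_rescale : (fun ω ↦ K ^ p * (Z ω ^ 2 / K) ^ p) =ᵐ[P] fun ω ↦ Z ω ^ (2 * p) := by
    filter_upwards [hZ_nonneg] with ω hω
    rw [← mul_rpow hK.le (by positivity), mul_div_cancel₀ _ hK.ne', rpow_mul hω, rpow_two]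
  obtain ⟨h_int, h_le⟩ := integrable_rpow_and_integral_rpow_le_of_mul_exp_tail
    ((hZ.pow_const 2).div_const K) (ae_of_all _ fun ω ↦ by positivity) hA h_sq_tail hp
  refine ⟨(h_int.const_mul (K ^ p)).congr h_rescale, ?_⟩
  calc ∫ ω, Z ω ^ (2 * p) ∂P = K ^ p * ∫ ω, (Z ω ^ 2 / K) ^ p ∂P := by
        rw [← integral_congr_ae h_rescale, integral_const_mul]
    _ ≤ K ^ p * (2 ^ p * (p ^ p + log A ^ p)) := by gcongr
    _ = (p ^ p + log A ^ p) * (2 * K) ^ p := by rw [mul_rpow zero_le_two hK.le]; ring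

/-- Lemma 2.3: a sub-Gaussian tail bound implies moment bounds. -/
theorem tail_to_moment {Ω : Type*} [MeasurableSpace Ω] (P : Measure Ω)
    [IsProbabilityMeasure P] (Z : Ω → ℝ) (hZmeas : Measurable Z)
    (hZnonneg : ∀ ω, 0 ≤ Z ω) (A Θ : ℝ) (hA : 2 ≤ A) (hΘ : 0 < Θ)
    (htail : ∀ ϑ : ℝ, 0 < ϑ →
      (P {ω | Z ω > ϑ}).toReal ≤
        2 * A * Real.exp (-ϑ ^ 2 / (2 * Real.exp 1 * Θ ^ 2))) :
    ∀ p : ℝ, 1 ≤ p →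
      ∫ ω, Z ω ^ (2 * p) ∂P ≤
        (p ^ p + Real.log A ^ p) * (8 * Real.exp 1 * Θ ^ 2) ^ p := by
  intro p hp
  have hL : 0 ≤ log A := log_nonneg (by linarith)
  refine (tail_to_moment_general hZmeas.aemeasurable (ae_of_all _ hZnonneg) (by linarith)
    (by positivity) htail hp).2.trans ?_
  gcongr _ * ?_ ^ p
  nlinarith [mul_pos (exp_pos 1) (pow_pos hΘ 2)]
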